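/- arXiv:2102.05932 — 3 statements merged into one kernel-verified Lean document; each statement's English description precedes it below -/
import Mathlib

section
/- Let N ≥ 2, let l ≥ 1 be an integer, let 0 ≤ α < β < ∞ and μ ∈ ℝ. Suppose v : [α,β] → ℝ is continuously differentiable on [α,β], twice differentiable on (α,β), positive on [α,β], satisfies the radial Sturm–Liouville equation −v''(r) − ((N−1)/r) v'(r) + (l(l+N−2)/r²) v(r) = μ v(r) for all r ∈ (α,β), and satisfies the Neumann boundary conditions v'(α) = 0 and v'(β) = 0. Then v'(r) > 0 for every r ∈ (α,β), and moreover (l(l+N−2)/r² − μ) v(r)² ≥ (l(l+N−2)/β² − μ) v(β)² for every r ∈ (α,β). -/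
open Set

/-!
In divergence form the equation says that the flux `w = r ^ (N - 1) * v'` has derivative
`w' = r ^ (N - 1) * q * v`, where `q = l (l + N - 2) / r ^ 2 - μ` is strictly decreasing. Hence `w'`
changes sign at most once, from positive to negative, and since `w` vanishes at both endpoints it is
positive in between. If `q β ≥ 0`, then `w` would be strictly increasing on `[α, β]`, so `q β < 0`;
together with the monotonicity of `v` this gives
`q β * v β ^ 2 ≤ q β * v r ^ 2 ≤ q r * v r ^ 2`.
-/

section SignChangingDerivative

variable {a b : ℝ} {w ρ g : ℝ → ℝ}

lemma left_lt_right_of_hasDerivAt_mul_strictAntiOn (hab : a < b) (hw : ContinuousOn w (Icc a b))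
    (hw' : ∀ x ∈ Ioo a b, HasDerivAt w (ρ x * g x) x) (hρ : ∀ x ∈ Ioo a b, 0 < ρ x)
    (hg : StrictAntiOn g (Ioc a b)) (hgb : 0 ≤ g b) : w a < w b := by
  obtain ⟨x, hx, hslope⟩ := exists_hasDerivAt_eq_slope w _ hab hw hw'
  have hgx : 0 < g x := hgb.trans_lt (hg (Ioo_subset_Ioc_self hx) (right_mem_Ioc.2 hab) hx.2)
  have hslope_pos : 0 < (w b - w a) / (b - a) := hslope ▸ mul_pos (hρ x hx) hgx
  exact sub_pos.1 ((div_pos_iff_of_pos_right (sub_pos.2 hab)).1 hslope_pos)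

lemma right_lt_left_of_hasDerivAt_mul_strictAntiOn (hab : a < b) (hw : ContinuousOn w (Icc a b))
    (hw' : ∀ x ∈ Ioo a b, HasDerivAt w (ρ x * g x) x) (hρ : ∀ x ∈ Ioo a b, 0 < ρ x)
    (hg : StrictAntiOn g (Ico a b)) (hga : g a ≤ 0) : w b < w a := by
  obtain ⟨x, hx, hslope⟩ := exists_hasDerivAt_eq_slope w _ hab hw hw'
  have hgx : g x < 0 := (hg (left_mem_Ico.2 hab) (Ioo_subset_Ico_self hx) hx.1).trans_le hga
  have hslope_neg : (w b - w a) / (b - a) < 0 := hslope ▸ mul_neg_of_pos_of_neg (hρ x hx) hgx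
  simpa using (div_lt_iff₀ (sub_pos.2 hab)).1 hslope_neg

lemma pos_on_Ioo_of_hasDerivAt_mul_strictAntiOn (hw : ContinuousOn w (Icc a b))
    (hw' : ∀ x ∈ Ioo a b, HasDerivAt w (ρ x * g x) x) (hρ : ∀ x ∈ Ioo a b, 0 < ρ x)
    (hg : StrictAntiOn g (Ioo a b)) (hwa : 0 ≤ w a) (hwb : 0 ≤ w b) :
    ∀ x ∈ Ioo a b, 0 < w x := by
  intro x hx
  rcases le_total 0 (g x) with hgx | hgx
  · have hsub : Ioo a x ⊆ Ioo a b := Ioo_subset_Ioo_right hx.2.le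
    exact hwa.trans_lt <| left_lt_right_of_hasDerivAt_mul_strictAntiOn hx.1
      (hw.mono (Icc_subset_Icc_right hx.2.le)) (fun y hy => hw' y (hsub hy))
      (fun y hy => hρ y (hsub hy)) (hg.mono (Ioc_subset_Ioo_right hx.2)) hgx
  · have hsub : Ioo x b ⊆ Ioo a b := Ioo_subset_Ioo_left hx.1.le
    exact hwb.trans_lt <| right_lt_left_of_hasDerivAt_mul_strictAntiOn hx.2
      (hw.mono (Icc_subset_Icc_left hx.1.le)) (fun y hy => hw' y (hsub hy))
      (fun y hy => hρ y (hsub hy)) (hg.mono (Ico_subset_Ioo_left hx.1)) hgx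

end SignChangingDerivative

lemma angular_eigenvalue_pos {N l : ℕ} (hN : 2 ≤ N) (hl : 1 ≤ l) :
    0 < (l : ℝ) * ((l : ℝ) + (N : ℝ) - 2) := by
  have hN' : (2 : ℝ) ≤ N := by exact_mod_cast hN
  have hl' : (1 : ℝ) ≤ l := by exact_mod_cast hl
  exact mul_pos (by linarith) (by linarith)

lemma strictAntiOn_div_sq_sub {c : ℝ} (hc : 0 < c) (μ : ℝ) :
    StrictAntiOn (fun r : ℝ => c / r ^ 2 - μ) (Ioi 0) := fun x (hx : 0 < x) _ _ hxy =>
  sub_lt_sub_right (div_lt_div_of_pos_left hc (pow_pos hx 2)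
    (pow_lt_pow_left₀ hxy hx.le two_ne_zero)) μ

lemma hasDerivAt_pow_mul {n : ℕ} {u : ℝ → ℝ} {u' r : ℝ} (hr : r ≠ 0) (hu : HasDerivAt u u' r) :
    HasDerivAt (fun r => r ^ n * u r) (r ^ n * (u' + n / r * u r)) r := by
  refine ((hasDerivAt_pow n r).fun_mul hu).congr_deriv ?_
  rcases n with _ | n
  · simp
  · rw [Nat.add_sub_cancel]
    field_simp
    ring

lemma hasDerivAt_radial_flux {N : ℕ} {c μ r v'' : ℝ} {v v' : ℝ → ℝ} (hN : 1 ≤ N) (hr : r ≠ 0)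
    (hv' : HasDerivAt v' v'' r)
    (heq : -v'' - ((N : ℝ) - 1) / r * v' r + c / r ^ 2 * v r = μ * v r) :
    HasDerivAt (fun r => r ^ (N - 1) * v' r) (r ^ (N - 1) * v r * (c / r ^ 2 - μ)) r := by
  refine (hasDerivAt_pow_mul hr hv').congr_deriv ?_
  rw [Nat.cast_pred hN, mul_assoc]
  congr 1
  linear_combination -heq

theorem sl_first_eigenfunction_monotone_general {α β : ℝ} {p ρ q v v' : ℝ → ℝ}
    (hp : ∀ r ∈ Ioo α β, 0 < p r) (hρ : ∀ r ∈ Ioo α β, 0 < ρ r)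
    (hq : StrictAntiOn q (Ioc α β)) (hv : ContinuousOn v (Ioc α β))
    (hderiv : ∀ r ∈ Ioo α β, HasDerivAt v (v' r) r) (hpos : ∀ r ∈ Ioo α β, 0 < v r)
    (hflux : ContinuousOn (fun r => p r * v' r) (Icc α β))
    (heq : ∀ r ∈ Ioo α β, HasDerivAt (fun r => p r * v' r) (ρ r * v r * q r) r)
    (hbα : 0 ≤ p α * v' α) (hbβ : p β * v' β = 0) :
    ∀ r ∈ Ioo α β, 0 < v' r ∧ q β * v β ^ 2 ≤ q r * v r ^ 2 := by
  have hρv : ∀ r ∈ Ioo α β, 0 < ρ r * v r := fun r hr => mul_pos (hρ r hr) (hpos r hr)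
  have hv'pos : ∀ r ∈ Ioo α β, 0 < v' r := fun r hr =>
    pos_of_mul_pos_right (pos_on_Ioo_of_hasDerivAt_mul_strictAntiOn hflux heq hρv
      (hq.mono Ioo_subset_Ioc_self) hbα hbβ.ge r hr) (hp r hr).le
  have hmono : MonotoneOn v (Ioc α β) := by
    refine monotoneOn_of_hasDerivWithinAt_nonneg (f' := v') (convex_Ioc α β) hv ?_ ?_ <;>
      rw [interior_Ioc]
    · exact fun r hr => (hderiv r hr).hasDerivWithinAt
    · exact fun r hr => (hv'pos r hr).le
  intro r hr
  have hαβ : α < β := hr.1.trans hr.2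
  have hr' : r ∈ Ioc α β := Ioo_subset_Ioc_self hr
  have hβ' : β ∈ Ioc α β := right_mem_Ioc.2 hαβ
  have hqβ : q β < 0 := by
    by_contra! hqβ
    have hlt := left_lt_right_of_hasDerivAt_mul_strictAntiOn hαβ hflux heq hρv hq hqβ
    exact (hbα.trans_lt hlt).ne' hbβ
  refine ⟨hv'pos r hr, ?_⟩
  calc
    q β * v β ^ 2 ≤ q β * v r ^ 2 :=
      mul_le_mul_of_nonpos_left
        (pow_le_pow_left₀ (hpos r hr).le (hmono hr' hβ' hr.2.le) 2) hqβ.le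
    _ ≤ q r * v r ^ 2 := mul_le_mul_of_nonneg_right (hq hr' hβ' hr.2).le (sq_nonneg _)

/-- Lemma lem:v: for a positive eigenfunction `v` of the radial
Sturm–Liouville problem with Neumann boundary conditions and `l ≥ 1`, the
derivative `v'` is positive on `(α,β)` and the stated inequality holds. -/
theorem sl_first_eigenfunction_monotone
    (N l : ℕ) (hN : 2 ≤ N) (hl : 1 ≤ l)
    (α β μ : ℝ) (hα : 0 ≤ α) (hαβ : α < β)
    (v v' v'' : ℝ → ℝ)
    (hderiv : ∀ r ∈ Set.Icc α β, HasDerivWithinAt v (v' r) (Set.Icc α β) r)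
    (hv'cont : ContinuousOn v' (Set.Icc α β))
    (hderiv2 : ∀ r ∈ Set.Ioo α β, HasDerivAt v' (v'' r) r)
    (hpos : ∀ r ∈ Set.Icc α β, 0 < v r)
    (heq : ∀ r ∈ Set.Ioo α β,
      -v'' r - ((N : ℝ) - 1) / r * v' r
        + ((l : ℝ) * ((l : ℝ) + (N : ℝ) - 2)) / r ^ 2 * v r = μ * v r)
    (hbα : v' α = 0) (hbβ : v' β = 0) :
    ∀ r ∈ Set.Ioo α β, 0 < v' r ∧
      ((l : ℝ) * ((l : ℝ) + (N : ℝ) - 2) / r ^ 2 - μ) * (v r) ^ 2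
        ≥ ((l : ℝ) * ((l : ℝ) + (N : ℝ) - 2) / β ^ 2 - μ) * (v β) ^ 2 :=
  sl_first_eigenfunction_monotone_general
    (fun r hr => pow_pos (hα.trans_lt hr.1) (N - 1))
    (fun r hr => pow_pos (hα.trans_lt hr.1) (N - 1))
    ((strictAntiOn_div_sq_sub (angular_eigenvalue_pos hN hl) μ).mono
      fun r hr => hα.trans_lt hr.1)
    ((HasDerivWithinAt.continuousOn hderiv).mono Ioc_subset_Icc_self)
    (fun r hr => (hderiv r (Ioo_subset_Icc_self hr)).hasDerivAt (Icc_mem_nhds hr.1 hr.2))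
    (fun r hr => hpos r (Ioo_subset_Icc_self hr))
    ((continuousOn_pow (N - 1)).mul hv'cont)
    (fun r hr => hasDerivAt_radial_flux (one_le_two.trans hN) (hα.trans_lt hr.1).ne'
      (hderiv2 r hr) (heq r hr))
    (by rw [hbα, mul_zero]) (by rw [hbβ, mul_zero])
end

section
/- Let N ≥ 2, let 0 ≤ α < β < ∞ and μ > 0. Suppose v : [α,β] → ℝ is continuously differentiable, the function r ↦ r^{N−1} v'(r) is differentiable on (α,β) with (r^{N−1} v'(r))' = −μ r^{N−1} v(r) for all r ∈ (α,β), and v'(α) = v'(β) = 0. Suppose moreover that there exists γ ∈ (α,β) such that v > 0 on (α,γ), v(γ) = 0 and v < 0 on (γ,β). Then v'(s) < 0 for every s ∈ (α,β); in particular v' does not vanish on (α,β). -/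
open Set

/-!
The equation prescribes the derivative of the flux `r ^ (N - 1) * v'`: the flux strictly decreases
while `v > 0` and strictly increases while `v < 0`. Its interior values therefore lie below its
boundary values, which vanish by the Neumann conditions, and the weight `r ^ (N - 1)` is positive.
-/

theorem lt_max_endpoints_of_deriv_neg_of_deriv_pos {f : ℝ → ℝ} {a b c : ℝ}
    (hf : ContinuousOn f (Icc a b))
    (hneg : ∀ x ∈ Ioo a b, x < c → deriv f x < 0)
    (hpos : ∀ x ∈ Ioo a b, c < x → 0 < deriv f x)
    {x : ℝ} (hx : x ∈ Ioo a b) : f x < max (f a) (f b) := by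
  rcases le_total x c with hxc | hcx
  · have hanti : StrictAntiOn f (Icc a x) := by
      refine strictAntiOn_of_deriv_neg (convex_Icc a x) (hf.mono (Icc_subset_Icc_right hx.2.le)) ?_
      rw [interior_Icc]
      exact fun y hy ↦ hneg y ⟨hy.1, hy.2.trans hx.2⟩ (hy.2.trans_le hxc)
    exact lt_max_of_lt_left
      (hanti (left_mem_Icc.mpr hx.1.le) (right_mem_Icc.mpr hx.1.le) hx.1)
  · have hmono : StrictMonoOn f (Icc x b) := by
      refine strictMonoOn_of_deriv_pos (convex_Icc x b) (hf.mono (Icc_subset_Icc_left hx.1.le)) ?_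
      rw [interior_Icc]
      exact fun y hy ↦ hpos y ⟨hx.1.trans hy.1, hy.2⟩ (hcx.trans_lt hy.1)
    exact lt_max_of_lt_right
      (hmono (left_mem_Icc.mpr hx.2.le) (right_mem_Icc.mpr hx.2.le) hx.2)

/-- Only the flux `p * v'` is constrained at the endpoints, so `p` may vanish there, as
`r ^ (N - 1)` does at `r = 0`. -/
theorem second_radial_eigenfunction_derivative_negative_general
    {α β γ : ℝ} {p w v v' : ℝ → ℝ}
    (hp : ∀ r ∈ Ioo α β, 0 < p r) (hw : ∀ r ∈ Ioo α β, 0 < w r)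
    (hderiv : ∀ r ∈ Ioo α β, HasDerivAt v (v' r) r)
    (hcont : ContinuousOn (fun s ↦ p s * v' s) (Icc α β))
    (hode : ∀ r ∈ Ioo α β, HasDerivAt (fun s ↦ p s * v' s) (-(w r * v r)) r)
    (hbα : p α * v' α ≤ 0) (hbβ : p β * v' β ≤ 0)
    (hpos : ∀ r ∈ Ioo α β, r < γ → 0 < v r) (hneg : ∀ r ∈ Ioo α β, γ < r → v r < 0) :
    ∀ s ∈ Ioo α β, v' s < 0 := by
  intro s hs
  have flux_lt_max : p s * v' s < max (p α * v' α) (p β * v' β) := by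
    refine lt_max_endpoints_of_deriv_neg_of_deriv_pos (c := γ) hcont ?_ ?_ hs
    · intro r hr hrγ
      rw [(hode r hr).deriv]
      exact neg_neg_of_pos (mul_pos (hw r hr) (hpos r hr hrγ))
    · intro r hr hγr
      rw [(hode r hr).deriv]
      exact neg_pos_of_neg (mul_neg_of_pos_of_neg (hw r hr) (hneg r hr hγr))
  have flux_neg : p s * v' s < 0 := flux_lt_max.trans_le (max_le hbα hbβ)
  exact (pos_iff_neg_of_mul_neg flux_neg).mp (hp s hs)

/-- Lemma lem:2ev: a second radial Neumann eigenfunction `v`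
(positive then negative, with one interior zero) has `v' < 0` throughout `(α,β)`;
in particular `v'` does not vanish on `(α,β)`. -/
theorem second_radial_eigenfunction_derivative_negative
    (N : ℕ) (hN : 2 ≤ N)
    (α β μ : ℝ) (hα : 0 ≤ α) (hαβ : α < β) (hμ : 0 < μ)
    (v v' : ℝ → ℝ)
    (hderiv : ∀ r ∈ Set.Icc α β, HasDerivWithinAt v (v' r) (Set.Icc α β) r)
    (hv'cont : ContinuousOn v' (Set.Icc α β))
    (hode : ∀ r ∈ Set.Ioo α β,
      HasDerivAt (fun s : ℝ => s ^ (N - 1) * v' s) (-μ * r ^ (N - 1) * v r) r)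
    (hbα : v' α = 0) (hbβ : v' β = 0)
    (γ : ℝ) (hγ : γ ∈ Set.Ioo α β)
    (hpos : ∀ r ∈ Set.Ioo α γ, 0 < v r) (hγ0 : v γ = 0)
    (hneg : ∀ r ∈ Set.Ioo γ β, v r < 0) :
    ∀ s ∈ Set.Ioo α β, v' s < 0 := by
  have hweight : ∀ r ∈ Ioo α β, 0 < r ^ (N - 1) := fun r hr ↦ pow_pos (hα.trans_lt hr.1) _
  exact second_radial_eigenfunction_derivative_negative_general
    (p := fun r ↦ r ^ (N - 1)) (w := fun r ↦ μ * r ^ (N - 1))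
    hweight (fun r hr ↦ mul_pos hμ (hweight r hr))
    (fun r hr ↦ (hderiv r (Ioo_subset_Icc_self hr)).hasDerivAt (Icc_mem_nhds hr.1 hr.2))
    ((continuous_pow (N - 1)).continuousOn.mul hv'cont)
    (fun r hr ↦ by simpa only [neg_mul] using hode r hr)
    (by simp [hbα]) (by simp [hbβ])
    (fun r hr hrγ ↦ hpos r ⟨hr.1, hrγ⟩) (fun r hr hγr ↦ hneg r ⟨hγr, hr.2⟩)
end

section
/- Let N ≥ 2, let 0 ≤ α < β < ∞ and μ ∈ ℝ. Suppose v : [α,β] → ℝ is continuously differentiable on [α,β], three times differentiable on (α,β), and satisfies −v''(r) − ((N−1)/r) v'(r) = μ v(r) for all r ∈ (α,β). Then u := v' satisfies −u''(r) − ((N−1)/r) u'(r) + ((N−1)/r²) u(r) = μ u(r) for all r ∈ (α,β); moreover, if in addition v'(α) = v'(β) = 0, then u satisfies the Dirichlet boundary conditions u(α) = u(β) = 0. -/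
open Set

section DifferentiatedEquation

variable {𝕜 E : Type*} [NontriviallyNormedField 𝕜] [NormedAddCommGroup E] [NormedSpace 𝕜 E]
  {v v' v'' v''' : 𝕜 → E}

theorem hasDerivAt_const_div (c : 𝕜) {r : 𝕜} (hr : r ≠ 0) :
    HasDerivAt (fun x ↦ c / x) (-(c / r ^ 2)) r := by
  simpa only [div_eq_mul_inv, mul_neg] using (hasDerivAt_inv hr).const_mul c

theorem derivative_satisfies_differentiated_equation {p : 𝕜 → 𝕜} {p' μ r : 𝕜}
    (hp : HasDerivAt p p' r) (hv : HasDerivAt v (v' r) r) (hv' : HasDerivAt v' (v'' r) r)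
    (hv'' : HasDerivAt v'' (v''' r) r)
    (heq : ∀ᶠ x in nhds r, -v'' x - p x • v' x = μ • v x) :
    -v''' r - p r • v'' r - p' • v' r = μ • v' r := by
  have lhs_deriv : HasDerivAt (fun x ↦ -v'' x - p x • v' x)
      (-v''' r - (p r • v'' r + p' • v' r)) r :=
    hv''.fun_neg.fun_sub (hp.fun_smul hv')
  have rhs_deriv : HasDerivAt (fun x ↦ μ • v x) (μ • v' r) r := hv.fun_const_smul μ
  rw [sub_sub]
  exact lhs_deriv.unique (rhs_deriv.congr_of_eventuallyEq heq)

theorem derivative_satisfies_l_one_equation_general {s : Set 𝕜} (hs : IsOpen s)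
    (h0 : (0 : 𝕜) ∉ s) (c μ : 𝕜)
    (hv : ∀ r ∈ s, HasDerivAt v (v' r) r)
    (hv' : ∀ r ∈ s, HasDerivAt v' (v'' r) r)
    (hv'' : ∀ r ∈ s, HasDerivAt v'' (v''' r) r)
    (heq : ∀ r ∈ s, -v'' r - (c / r) • v' r = μ • v r) :
    ∀ r ∈ s, -v''' r - (c / r) • v'' r + (c / r ^ 2) • v' r = μ • v' r := by
  intro r hr
  -- The `l = 1` potential `c / r ^ 2` is minus the derivative of the drift coefficient `c / r`.
  have coeff_deriv : HasDerivAt (fun x ↦ c / x) (-(c / r ^ 2)) r :=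
    hasDerivAt_const_div c (ne_of_mem_of_not_mem hr h0)
  have heq_near : ∀ᶠ x in nhds r, -v'' x - (c / x) • v' x = μ • v x :=
    Filter.eventually_of_mem (hs.mem_nhds hr) heq
  simpa only [neg_smul, sub_neg_eq_add] using
    derivative_satisfies_differentiated_equation coeff_deriv (hv r hr) (hv' r hr) (hv'' r hr)
      heq_near

end DifferentiatedEquation

/-- differentiating the radial equation with `l = 0` shows that
`u := v'` satisfies the radial equation with `l = 1`; moreover, if `v` satisfies
Neumann boundary conditions then `u` satisfies Dirichlet boundary conditions. -/
theorem derivative_satisfies_l_one_equation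
    (N : ℕ) (hN : 2 ≤ N)
    (α β μ : ℝ) (hα : 0 ≤ α) (hαβ : α < β)
    (v v' v'' v''' : ℝ → ℝ)
    (hderiv : ∀ r ∈ Set.Icc α β, HasDerivWithinAt v (v' r) (Set.Icc α β) r)
    (hv'cont : ContinuousOn v' (Set.Icc α β))
    (hderiv2 : ∀ r ∈ Set.Ioo α β, HasDerivAt v' (v'' r) r)
    (hderiv3 : ∀ r ∈ Set.Ioo α β, HasDerivAt v'' (v''' r) r)
    (heq : ∀ r ∈ Set.Ioo α β, -v'' r - ((N : ℝ) - 1) / r * v' r = μ * v r) :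
    (∀ r ∈ Set.Ioo α β,
      -v''' r - ((N : ℝ) - 1) / r * v'' r + ((N : ℝ) - 1) / r ^ 2 * v' r
        = μ * v' r) ∧
    (v' α = 0 → v' β = 0 → v' α = 0 ∧ v' β = 0) := by
  have hv : ∀ r ∈ Ioo α β, HasDerivAt v (v' r) r := fun r hr ↦
    (hderiv r (Ioo_subset_Icc_self hr)).hasDerivAt (Icc_mem_nhds hr.1 hr.2)
  exact ⟨derivative_satisfies_l_one_equation_general isOpen_Ioo (fun h0 ↦ hα.not_gt h0.1)
    ((N : ℝ) - 1) μ hv hderiv2 hderiv3 heq, And.intro⟩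
end
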